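/- Let D be a distribution on ℝⁿ, let g be a continuous Riemannian metric on ℝⁿ, and let γ : [a,b] → ℝⁿ be an absolutely continuous horizontal curve with length L = ℓ_g(γ). Then there exist a unique absolutely continuous horizontal curve μ : [0,L] → ℝⁿ with g(μ(s))(μ'(s), μ'(s)) = 1 for almost every s ∈ [0,L], and a unique absolutely continuous nondecreasing surjective σ : [a,b] → [0,L], such that γ = μ ∘ σ. -/

import Mathlib

/-!
With `ρ = g(γ)(γ', γ')^{1/2}` the speed of `γ`, the reparameterization is `σ(t) = ∫_a^t ρ` and
`μ = γ ∘ τ`, where `τ` is any right inverse of `σ`. It is well defined because `γ' = 0` wherever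
`ρ = 0`, so `γ` is constant on the intervals where `σ` is constant.

Both halves of the statement rest on transport of measure rather than on differentiating `μ`.
The right inverse `τ` is monotone and carries Lebesgue measure on `[0, L]` to the arc-length
measure `ρ dt` on `[a, b]` (`map_rightInverse`); consequently `σ` carries `ρ dt` back to Lebesgue
measure (`map_arcMeasure`). The first fact shows that `(γ' / ρ) ∘ τ` is an a.e. derivative of `μ`
(`isACOn_comp_rightInverse`), and that everything true at almost every `t` with `ρ t > 0` is true
at `τ s` for almost every `s`. Horizontality and unit speed of `μ` follow at once, with no
measurability of the distribution needed.

For uniqueness, suppose `γ = μ₂ ∘ σ₂`. The second fact, applied to `σ₂`, gives the chain rule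
`γ' = σ₂' • (μ₂' ∘ σ₂)` a.e., and `μ₂` has unit speed at `σ₂ t` for almost every `t` with
`σ₂' t > 0`. Hence `σ₂' = ρ` a.e. (`density_eq_speed`), so `σ₂ = σ`, and then `μ₂ = μ` since `σ`
is onto.
-/

open Set MeasureTheory

/-- `f` is absolutely continuous on `[a,b]` with a.e. derivative `f'`: `f'` is integrable
on `[a,b]` and `f t = f a + ∫_a^t f'` for all `t ∈ [a,b]`. -/
def IsACOn {E : Type*} [NormedAddCommGroup E] [NormedSpace ℝ E]
    (f f' : ℝ → E) (a b : ℝ) : Prop :=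
  IntegrableOn f' (Icc a b) ∧ ∀ t ∈ Icc a b, f t = f a + ∫ s in a..t, f' s

/-- The value `g(x)(v,v)` of the quadratic form of the Riemannian metric `g` (given by
its matrix at each point) on the vector `v`. -/
def qf {n : ℕ} (g : (Fin n → ℝ) → Matrix (Fin n) (Fin n) ℝ)
    (x v : Fin n → ℝ) : ℝ :=
  ∑ i, v i * (g x).mulVec v i

/-! ### Absolutely continuous functions on an interval -/

section AbsolutelyContinuous

variable {E : Type*} [NormedAddCommGroup E] [NormedSpace ℝ E]

lemma IsACOn.restrict_right {f f' : ℝ → E} {a b t : ℝ} (hf : IsACOn f f' a b)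
    (ht : t ∈ Icc a b) : IsACOn f f' a t :=
  ⟨hf.1.mono_set (Icc_subset_Icc_right ht.2), fun s hs => hf.2 s ⟨hs.1, hs.2.trans ht.2⟩⟩

lemma IsACOn.intervalIntegrable {f f' : ℝ → E} {a b s t : ℝ} (hf : IsACOn f f' a b)
    (hs : s ∈ Icc a b) (ht : t ∈ Icc a b) : IntervalIntegrable f' volume s t := by
  rw [intervalIntegrable_iff]
  refine hf.1.mono_set (uIoc_subset_uIcc.trans ?_)
  exact uIcc_subset_Icc hs ht

lemma IsACOn.sub_eq {f f' : ℝ → E} {a b s t : ℝ} (hf : IsACOn f f' a b)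
    (hs : s ∈ Icc a b) (ht : t ∈ Icc a b) : f t - f s = ∫ u in s..t, f' u := by
  have ha : a ∈ Icc a b := ⟨le_rfl, hs.1.trans hs.2⟩
  rw [hf.2 t ht, hf.2 s hs, ← intervalIntegral.integral_add_adjacent_intervals
    (hf.intervalIntegrable ha hs) (hf.intervalIntegrable hs ht)]
  abel

lemma IsACOn.sub_eq_setIntegral {f f' : ℝ → E} {a b : ℝ} (hab : a ≤ b) (hf : IsACOn f f' a b) :
    f b - f a = ∫ u in Icc a b, f' u := by
  rw [hf.sub_eq ⟨le_rfl, hab⟩ ⟨hab, le_rfl⟩, intervalIntegral.integral_of_le hab,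
    integral_Icc_eq_integral_Ioc]

lemma IsACOn.continuousOn {f f' : ℝ → E} {a b : ℝ} (hab : a ≤ b) (hf : IsACOn f f' a b) :
    ContinuousOn f (Icc a b) := by
  have h := intervalIntegral.continuousOn_primitive_interval (f := f') (a := a) (b := b)
    (μ := volume) (by rw [uIcc_of_le hab]; exact hf.1)
  rw [uIcc_of_le hab] at h
  exact (continuousOn_const.add h).congr hf.2

/-- Lebesgue differentiation: the a.e. derivative really is the derivative almost everywhere. -/
lemma IsACOn.ae_hasDerivWithinAt [CompleteSpace E] {f f' : ℝ → E} {a b : ℝ} (hab : a ≤ b)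
    (hf : IsACOn f f' a b) :
    ∀ᵐ t ∂(volume.restrict (Icc a b)), HasDerivWithinAt f (f' t) (Icc a b) t := by
  have ha : a ∈ Icc a b := ⟨le_rfl, hab⟩
  have hb : b ∈ Icc a b := ⟨hab, le_rfl⟩
  rw [ae_restrict_iff' measurableSet_Icc]
  filter_upwards [(hf.intervalIntegrable ha hb).ae_hasDerivAt_integral] with t ht hmem
  rw [uIcc_of_le hab] at ht
  exact ((ht hmem a ha).hasDerivWithinAt.const_add (f a)).congr hf.2 (hf.2 t hmem)

lemma accPt_Icc {a b t : ℝ} (hab : a < b) (ht : t ∈ Icc a b) :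
    AccPt t (Filter.principal (Icc a b)) :=
  (uniqueDiffOn_Icc hab t ht).accPt

lemma IsACOn.ae_nonneg {σ h : ℝ → ℝ} {a b : ℝ} (hab : a ≤ b) (hσ : IsACOn σ h a b)
    (hmono : MonotoneOn σ (Icc a b)) : ∀ᵐ t ∂(volume.restrict (Icc a b)), 0 ≤ h t := by
  rcases hab.eq_or_lt with rfl | hlt
  · simp
  filter_upwards [hσ.ae_hasDerivWithinAt hab, ae_restrict_mem measurableSet_Icc] with t ht hm
  exact ht.nonneg_of_monotoneOn (accPt_Icc hlt hm) hmono

lemma IsACOn.ae_unique [CompleteSpace E] {f f₁ f₂ : ℝ → E} {a b : ℝ} (hab : a ≤ b)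
    (h₁ : IsACOn f f₁ a b) (h₂ : IsACOn f f₂ a b) :
    ∀ᵐ t ∂(volume.restrict (Icc a b)), f₁ t = f₂ t := by
  rcases hab.eq_or_lt with rfl | hlt
  · simp
  filter_upwards [h₁.ae_hasDerivWithinAt hab, h₂.ae_hasDerivWithinAt hab,
    ae_restrict_mem measurableSet_Icc] with t ht₁ ht₂ hm
  exact (uniqueDiffOn_Icc hlt t hm).eq_deriv _ ht₁ ht₂

lemma IsACOn.monotoneOn {σ h : ℝ → ℝ} {a b : ℝ} (hσ : IsACOn σ h a b)
    (hh : ∀ᵐ t ∂(volume.restrict (Icc a b)), 0 ≤ h t) : MonotoneOn σ (Icc a b) := by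
  intro s hs t ht hst
  rw [← sub_nonneg, hσ.sub_eq hs ht]
  refine intervalIntegral.integral_nonneg_of_ae_restrict hst ?_
  exact ae_restrict_of_ae_restrict_of_subset (Icc_subset_Icc hs.1 ht.2) hh

end AbsolutelyContinuous

/-! ### The arc-length measure -/

/-- The measure `h(t) dt` on `[a,b]`. When `h` is the speed of a curve this is its arc-length
measure. Negative values of `h` are truncated to `0`. -/
noncomputable def arcMeasure (h : ℝ → ℝ) (a b : ℝ) : Measure ℝ :=
  (volume.restrict (Icc a b)).withDensity (fun t => ENNReal.ofReal (h t))

lemma aemeasurable_ofReal_density {h : ℝ → ℝ} {a b : ℝ} (hi : IntegrableOn h (Icc a b)) :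
    AEMeasurable (fun t => ENNReal.ofReal (h t)) (volume.restrict (Icc a b)) :=
  hi.aestronglyMeasurable.aemeasurable.ennreal_ofReal

lemma ae_arcMeasure_iff {h : ℝ → ℝ} {a b : ℝ} (hi : IntegrableOn h (Icc a b)) {p : ℝ → Prop} :
    (∀ᵐ t ∂(arcMeasure h a b), p t) ↔
      ∀ᵐ t ∂(volume.restrict (Icc a b)), 0 < h t → p t := by
  rw [arcMeasure, ae_withDensity_iff' (aemeasurable_ofReal_density hi)]
  simp

lemma integral_arcMeasure {E : Type*} [NormedAddCommGroup E] [NormedSpace ℝ E]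
    {h : ℝ → ℝ} {a b : ℝ} (hi : IntegrableOn h (Icc a b))
    (hh : ∀ᵐ t ∂(volume.restrict (Icc a b)), 0 ≤ h t) (F : ℝ → E) :
    ∫ t, F t ∂(arcMeasure h a b) = ∫ t in Icc a b, h t • F t := by
  rw [arcMeasure, integral_withDensity_eq_integral_toReal_smul₀ (aemeasurable_ofReal_density hi)
    (by simp)]
  refine integral_congr_ae ?_
  filter_upwards [hh] with t ht
  rw [ENNReal.toReal_ofReal ht]

lemma integrable_arcMeasure_iff {E : Type*} [NormedAddCommGroup E] [NormedSpace ℝ E]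
    {h : ℝ → ℝ} {a b : ℝ} (hi : IntegrableOn h (Icc a b))
    (hh : ∀ᵐ t ∂(volume.restrict (Icc a b)), 0 ≤ h t) (F : ℝ → E) :
    Integrable F (arcMeasure h a b) ↔ IntegrableOn (fun t => h t • F t) (Icc a b) := by
  rw [arcMeasure, integrable_withDensity_iff_integrable_smul₀' (aemeasurable_ofReal_density hi)
    (by simp)]
  refine integrable_congr ?_
  filter_upwards [hh] with t ht
  rw [ENNReal.toReal_ofReal ht]

lemma arcMeasure_absolutelyContinuous (h : ℝ → ℝ) (a b : ℝ) :
    arcMeasure h a b ≪ volume.restrict (Icc a b) :=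
  withDensity_absolutelyContinuous _ _

lemma arcMeasure_Iic {σ h : ℝ → ℝ} {a b t : ℝ} (hσ : IsACOn σ h a b)
    (hh : ∀ᵐ t ∂(volume.restrict (Icc a b)), 0 ≤ h t) (h0 : σ a = 0) (ht : t ∈ Icc a b) :
    arcMeasure h a b (Iic t) = ENNReal.ofReal (σ t) := by
  have hsub : Icc a t ⊆ Icc a b := Icc_subset_Icc_right ht.2
  have hr : IsACOn σ h a t := hσ.restrict_right ht
  have hset : Iic t ∩ Icc a b = Icc a t := by
    ext x
    simp only [mem_inter_iff, mem_Iic, mem_Icc]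
    exact ⟨fun hx => ⟨hx.2.1, hx.1⟩, fun hx => ⟨hx.2, hx.1, hx.2.trans ht.2⟩⟩
  rw [arcMeasure, withDensity_apply _ measurableSet_Iic,
    Measure.restrict_restrict measurableSet_Iic, hset,
    ← ofReal_integral_eq_lintegral_ofReal hr.1
      (ae_restrict_of_ae_restrict_of_subset hsub hh), ← hr.sub_eq_setIntegral ht.1, h0, sub_zero]

/-- A right inverse `τ` of the arc-length function `σ` carries Lebesgue measure on `[0, σ b]` to
the arc-length measure: up to an endpoint, `{τ ≤ t}` is the interval `[0, σ t]`. -/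
lemma map_rightInverse {σ h τ : ℝ → ℝ} {a b : ℝ} (hab : a ≤ b) (hσ : IsACOn σ h a b)
    (hh : ∀ᵐ t ∂(volume.restrict (Icc a b)), 0 ≤ h t) (h0 : σ a = 0)
    (hτ : ∀ s ∈ Icc 0 (σ b), τ s ∈ Icc a b ∧ σ (τ s) = s)
    (hτm : AEMeasurable τ (volume.restrict (Icc 0 (σ b)))) :
    Measure.map τ (volume.restrict (Icc 0 (σ b))) = arcMeasure h a b := by
  have hmono := hσ.monotoneOn hh
  have : IsFiniteMeasure (Measure.map τ (volume.restrict (Icc 0 (σ b)))) :=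
    Measure.isFiniteMeasure_map _ _
  have ha : a ∈ Icc a b := ⟨le_rfl, hab⟩
  have hb : b ∈ Icc a b := ⟨hab, le_rfl⟩
  have key : ∀ t ∈ Icc a b, Measure.map τ (volume.restrict (Icc 0 (σ b))) (Iic t)
      = arcMeasure h a b (Iic t) := by
    intro t ht
    rw [arcMeasure_Iic hσ hh h0 ht, Measure.map_apply_of_aemeasurable hτm measurableSet_Iic,
      Measure.restrict_apply' measurableSet_Icc]
    apply le_antisymm
    · calc _ ≤ volume (Icc 0 (σ t)) := by
            refine measure_mono ?_
            rintro s ⟨hs, hs'⟩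
            obtain ⟨h1, h2⟩ := hτ s hs'
            exact ⟨hs'.1, h2 ▸ hmono h1 ht hs⟩
        _ = _ := by simp
    · calc ENNReal.ofReal (σ t) = volume (Ico 0 (σ t)) := by simp
        _ ≤ _ := by
            refine measure_mono ?_
            rintro s ⟨hs0, hs1⟩
            have hs' : s ∈ Icc 0 (σ b) := ⟨hs0, hs1.le.trans (hmono ht hb ht.2)⟩
            obtain ⟨h1, h2⟩ := hτ s hs'
            refine ⟨?_, hs'⟩
            by_contra hc
            have := hmono ht h1 (le_of_lt (not_le.1 hc))
            linarith
  have out : ∀ t, Iic t ∩ Icc a b = ∅ ∨ ∃ u ∈ Icc a b, Iic t ∩ Icc a b = Iic u ∩ Icc a b := by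
    intro t
    rcases lt_or_ge t a with hta | hta
    · left
      ext x
      simp only [mem_inter_iff, mem_Iic, mem_Icc, mem_empty_iff_false, iff_false]
      intro hx
      linarith [hx.1, hx.2.1]
    · right
      refine ⟨min t b, ⟨le_min hta hab, min_le_right _ _⟩, ?_⟩
      ext x
      simp only [mem_inter_iff, mem_Iic, mem_Icc, le_min_iff]
      tauto
  have e1 : ∀ t, Measure.map τ (volume.restrict (Icc 0 (σ b))) (Iic t)
      = Measure.map τ (volume.restrict (Icc 0 (σ b))) (Iic t ∩ Icc a b) := by
    intro t
    rw [Measure.map_apply_of_aemeasurable hτm measurableSet_Iic,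
      Measure.map_apply_of_aemeasurable hτm (measurableSet_Iic.inter measurableSet_Icc),
      Measure.restrict_apply' measurableSet_Icc, Measure.restrict_apply' measurableSet_Icc]
    congr 1
    ext s
    simp only [mem_inter_iff, mem_preimage]
    exact ⟨fun hs => ⟨⟨hs.1, (hτ s hs.2).1⟩, hs.2⟩, fun hs => ⟨hs.1.1, hs.2⟩⟩
  have e2 : ∀ t, arcMeasure h a b (Iic t) = arcMeasure h a b (Iic t ∩ Icc a b) := by
    intro t
    refine (measure_inter_conull ?_).symm
    exact arcMeasure_absolutelyContinuous h a b
      (by rw [Measure.restrict_apply' measurableSet_Icc]; simp)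
  refine Measure.ext_of_Iic _ _ fun t => ?_
  rcases out t with ht | ⟨u, hu, ht⟩
  · rw [e1, e2, ht]; simp
  · rw [e1, e2, ht, ← e1, ← e2, key u hu]

lemma exists_rightInverse {σ h : ℝ → ℝ} {a b : ℝ} (hab : a ≤ b) (hσ : IsACOn σ h a b)
    (h0 : σ a = 0) : ∃ τ : ℝ → ℝ, ∀ s ∈ Icc 0 (σ b), τ s ∈ Icc a b ∧ σ (τ s) = s := by
  have hsurj : Icc 0 (σ b) ⊆ σ '' Icc a b := by
    have := intermediate_value_Icc hab (hσ.continuousOn hab)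
    rwa [h0] at this
  choose! τ hτ using hsurj
  exact ⟨τ, fun s hs => hτ hs⟩

lemma monotoneOn_rightInverse {σ h τ : ℝ → ℝ} {a b : ℝ} (hσ : IsACOn σ h a b)
    (hh : ∀ᵐ t ∂(volume.restrict (Icc a b)), 0 ≤ h t)
    (hτ : ∀ s ∈ Icc 0 (σ b), τ s ∈ Icc a b ∧ σ (τ s) = s) : MonotoneOn τ (Icc 0 (σ b)) := by
  intro s hs u hu hsu
  by_contra hc
  have := hσ.monotoneOn hh (hτ u hu).1 (hτ s hs).1 (not_le.1 hc).le
  rw [(hτ u hu).2, (hτ s hs).2] at this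
  exact hc (le_antisymm hsu this ▸ le_rfl)

/-- The arc-length function carries its arc-length measure to Lebesgue measure. This is the
substitution rule `∫ φ(σ(t)) σ'(t) dt = ∫ φ(s) ds`. -/
lemma map_arcMeasure {σ h : ℝ → ℝ} {a b : ℝ} (hab : a ≤ b) (hσ : IsACOn σ h a b)
    (hh : ∀ᵐ t ∂(volume.restrict (Icc a b)), 0 ≤ h t) (h0 : σ a = 0) :
    Measure.map σ (arcMeasure h a b) = volume.restrict (Icc 0 (σ b)) := by
  obtain ⟨τ, hτ⟩ := exists_rightInverse hab hσ h0
  have hτm : AEMeasurable τ (volume.restrict (Icc 0 (σ b))) :=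
    aemeasurable_restrict_of_monotoneOn measurableSet_Icc (monotoneOn_rightInverse hσ hh hτ)
  have hmap := map_rightInverse hab hσ hh h0 hτ hτm
  have hσm : AEMeasurable σ (arcMeasure h a b) :=
    (aemeasurable_restrict_of_monotoneOn measurableSet_Icc (hσ.monotoneOn hh)).mono_ac
      (arcMeasure_absolutelyContinuous h a b)
  rw [← hmap] at hσm ⊢
  rw [AEMeasurable.map_map_of_aemeasurable hσm hτm]
  calc _ = Measure.map id (volume.restrict (Icc 0 (σ b))) := by
        refine Measure.map_congr ?_
        filter_upwards [ae_restrict_mem measurableSet_Icc] with s hs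
        exact (hτ s hs).2
    _ = _ := Measure.map_id

/-! ### The speed of a curve -/

section Speed

variable {n : ℕ} {g : (Fin n → ℝ) → Matrix (Fin n) (Fin n) ℝ}

lemma qf_smul (x v : Fin n → ℝ) (c : ℝ) : qf g x (c • v) = c ^ 2 * qf g x v := by
  simp only [qf, Matrix.mulVec_smul, Finset.mul_sum, Pi.smul_apply, smul_eq_mul]
  exact Finset.sum_congr rfl fun i _ => by ring

lemma qf_pos (hgp : ∀ x, (g x).PosDef) (x : Fin n → ℝ) {v : Fin n → ℝ} (hv : v ≠ 0) :
    0 < qf g x v := by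
  have := (hgp x).dotProduct_mulVec_pos hv
  simpa [qf, dotProduct] using this

lemma qf_le (x v : Fin n → ℝ) : qf g x v ≤ (∑ i, ∑ j, |g x i j|) * ‖v‖ ^ 2 := by
  simp only [qf, Matrix.mulVec, dotProduct, Finset.mul_sum, Finset.sum_mul]
  refine Finset.sum_le_sum fun i _ => Finset.sum_le_sum fun j _ => ?_
  have hi : |v i| ≤ ‖v‖ := norm_le_pi_norm v i
  have hj : |v j| ≤ ‖v‖ := norm_le_pi_norm v j
  calc v i * (g x i j * v j) ≤ |v i * (g x i j * v j)| := le_abs_self _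
    _ = |g x i j| * (|v i| * |v j|) := by rw [abs_mul, abs_mul]; ring
    _ ≤ |g x i j| * (‖v‖ * ‖v‖) := by gcongr
    _ = _ := by ring

lemma continuous_qf (hgc : Continuous g) :
    Continuous fun p : (Fin n → ℝ) × (Fin n → ℝ) => qf g p.1 p.2 := by
  unfold qf Matrix.mulVec dotProduct
  have : ∀ i j, Continuous fun x => g x i j := fun i j => hgc.matrix_elem i j
  fun_prop

lemma integrableOn_speed (hgc : Continuous g) {γ γ' : ℝ → Fin n → ℝ} {a b : ℝ} (hab : a ≤ b)
    (hγ : IsACOn γ γ' a b) :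
    IntegrableOn (fun t => Real.sqrt (qf g (γ t) (γ' t))) (Icc a b) := by
  have hc : ContinuousOn γ (Icc a b) := hγ.continuousOn hab
  have hC : ContinuousOn (fun t => ∑ i, ∑ j, |g (γ t) i j|) (Icc a b) := by
    have h1 : ∀ i j, Continuous fun x => g x i j := fun i j => hgc.matrix_elem i j
    have h2 : Continuous fun x => ∑ i, ∑ j, |g x i j| := by fun_prop
    exact h2.comp_continuousOn hc
  obtain ⟨C, hCb⟩ := isCompact_Icc.exists_bound_of_continuousOn hC
  have hm : AEStronglyMeasurable (fun t => Real.sqrt (qf g (γ t) (γ' t)))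
      (volume.restrict (Icc a b)) :=
    (Real.continuous_sqrt.comp (continuous_qf hgc)).comp_aestronglyMeasurable
      ((hc.aestronglyMeasurable measurableSet_Icc).prodMk hγ.1.aestronglyMeasurable)
  refine Integrable.mono' (hγ.1.norm.const_mul (Real.sqrt C)) hm ?_
  filter_upwards [ae_restrict_mem measurableSet_Icc] with t ht
  rw [Real.norm_of_nonneg (Real.sqrt_nonneg _)]
  calc Real.sqrt (qf g (γ t) (γ' t)) ≤ Real.sqrt (C * ‖γ' t‖ ^ 2) := by
        refine Real.sqrt_le_sqrt ((qf_le _ _).trans ?_)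
        gcongr
        exact (le_abs_self _).trans (hCb t ht)
    _ = Real.sqrt C * ‖γ' t‖ := by
        rw [Real.sqrt_mul' _ (sq_nonneg _), Real.sqrt_sq (norm_nonneg _)]

lemma eq_zero_of_speed_eq_zero (hgp : ∀ x, (g x).PosDef) {x v : Fin n → ℝ}
    (h : Real.sqrt (qf g x v) = 0) : v = 0 := by
  by_contra hv
  exact (Real.sqrt_pos.2 (qf_pos hgp x hv)).ne' h

end Speed

/-! ### Existence and uniqueness of the arc-length parameterization -/

/-- The derivative formula for `γ ∘ τ`, where `τ` is a right inverse of a function `σ` with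
density `ρ`, provided `γ'` vanishes where `ρ` does and `γ ∘ τ ∘ σ = γ`: the derivative is
`(γ' / ρ) ∘ τ`. -/
lemma isACOn_comp_rightInverse {n : ℕ} {γ γ' : ℝ → Fin n → ℝ} {σ ρ τ : ℝ → ℝ} {a b : ℝ}
    (hab : a ≤ b) (hγ : IsACOn γ γ' a b) (hσ : IsACOn σ ρ a b) (hρ : ∀ t, 0 ≤ ρ t)
    (hz : ∀ t, ρ t = 0 → γ' t = 0) (h0 : σ a = 0)
    (hτ : ∀ s ∈ Icc 0 (σ b), τ s ∈ Icc a b ∧ σ (τ s) = s)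
    (hconst : ∀ t ∈ Icc a b, γ (τ (σ t)) = γ t) :
    IsACOn (fun s => γ (τ s)) (fun s => (ρ (τ s))⁻¹ • γ' (τ s)) 0 (σ b) := by
  have hmul : ∀ t, ρ t • (ρ t)⁻¹ • γ' t = γ' t := by
    intro t
    by_cases h : ρ t = 0
    · simp [h, hz t h]
    · rw [smul_smul, mul_inv_cancel₀ h, one_smul]
  -- On each `[a,t]`, the map `τ` carries `ds` to `ρ dt`, so `∫ (γ'/ρ) ∘ τ ds = ∫ γ' dt`.
  have main : ∀ t ∈ Icc a b, (∀ s ∈ Icc 0 (σ t), τ s ∈ Icc a t) →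
      IntegrableOn (fun s => (ρ (τ s))⁻¹ • γ' (τ s)) (Icc 0 (σ t)) ∧
      ∫ s in Icc 0 (σ t), (ρ (τ s))⁻¹ • γ' (τ s) = γ t - γ a := by
    intro t ht hτt
    have hσt := hσ.restrict_right ht
    have hγt := hγ.restrict_right ht
    have hσtb : σ t ≤ σ b :=
      hσ.monotoneOn (Filter.Eventually.of_forall hρ) ht ⟨hab, le_rfl⟩ ht.2
    have hh : ∀ᵐ t ∂(volume.restrict (Icc a t)), 0 ≤ ρ t := Filter.Eventually.of_forall hρ
    have hτ' : ∀ s ∈ Icc 0 (σ t), τ s ∈ Icc a t ∧ σ (τ s) = s := fun s hs =>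
      ⟨hτt s hs, (hτ s ⟨hs.1, hs.2.trans hσtb⟩).2⟩
    have hτm : AEMeasurable τ (volume.restrict (Icc 0 (σ t))) :=
      aemeasurable_restrict_of_monotoneOn measurableSet_Icc (monotoneOn_rightInverse hσt hh hτ')
    have hmap := map_rightInverse ht.1 hσt hh h0 hτ' hτm
    have hint : Integrable (fun t => (ρ t)⁻¹ • γ' t) (arcMeasure ρ a t) := by
      rw [integrable_arcMeasure_iff hσt.1 hh]
      simpa only [hmul] using hγt.1
    have hF := hint.aestronglyMeasurable
    have e := integral_arcMeasure hσt.1 hh (fun t => (ρ t)⁻¹ • γ' t)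
    simp only [hmul] at e
    rw [← hγt.sub_eq_setIntegral ht.1] at e
    rw [← hmap] at hF hint e
    refine ⟨(integrable_map_measure hF hτm).1 hint, ?_⟩
    rw [← e, integral_map hτm hF]
  have hbm : b ∈ Icc a b := ⟨hab, le_rfl⟩
  have ham : a ∈ Icc a b := ⟨le_rfl, hab⟩
  refine ⟨(main b hbm fun s hs => (hτ s hs).1).1, fun s hs => ?_⟩
  obtain ⟨h1, h2⟩ := hτ s hs
  have hmono := monotoneOn_rightInverse hσ (Filter.Eventually.of_forall hρ) hτ
  have h3 := (main (τ s) h1 (by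
    rw [h2]
    intro u hu
    have hu' : u ∈ Icc 0 (σ b) := ⟨hu.1, hu.2.trans hs.2⟩
    exact ⟨(hτ u hu').1.1, hmono hu' hs hu.2⟩)).2
  have h4 : γ (τ 0) = γ a := by rw [← hconst a ham, h0]
  rw [h2] at h3
  rw [intervalIntegral.integral_of_le hs.1, ← integral_Icc_eq_integral_Ioc, h3]
  change γ (τ s) = γ (τ 0) + _
  rw [h4]
  abel

/-- In any factorization `γ = μ ∘ σ` through a curve of unit speed, the density of `σ` is the
speed of `γ`. The proof obtains the chain rule `γ' = σ' • (μ' ∘ σ)` a.e. from the substitution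
rule, without differentiating `μ`. -/
lemma density_eq_speed {n : ℕ} {g : (Fin n → ℝ) → Matrix (Fin n) (Fin n) ℝ}
    {γ γ' μ μ' : ℝ → Fin n → ℝ} {σ ρ : ℝ → ℝ} {a b : ℝ} (hab : a ≤ b)
    (hγ : IsACOn γ γ' a b) (hσ : IsACOn σ ρ a b) (hmono : MonotoneOn σ (Icc a b))
    (h0 : σ a = 0) (hμ : IsACOn μ μ' 0 (σ b))
    (hunit : ∀ᵐ s ∂(volume.restrict (Icc 0 (σ b))), qf g (μ s) (μ' s) = 1)
    (hcomp : ∀ t ∈ Icc a b, γ t = μ (σ t)) :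
    ∀ᵐ t ∂(volume.restrict (Icc a b)), ρ t = Real.sqrt (qf g (γ t) (γ' t)) := by
  have hh := hσ.ae_nonneg hab hmono
  have hb : b ∈ Icc a b := ⟨hab, le_rfl⟩
  have ha : a ∈ Icc a b := ⟨le_rfl, hab⟩
  have meas : ∀ t ∈ Icc a b, AEMeasurable σ (arcMeasure ρ a t) := fun t ht =>
    (aemeasurable_restrict_of_monotoneOn measurableSet_Icc
      (hmono.mono (Icc_subset_Icc_right ht.2))).mono_ac (arcMeasure_absolutelyContinuous ρ a t)
  have sub : ∀ t ∈ Icc a b, IntegrableOn (fun u => ρ u • μ' (σ u)) (Icc a t) ∧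
      ∫ u in Icc a t, ρ u • μ' (σ u) = γ t - γ a := by
    intro t ht
    have hσt := hσ.restrict_right ht
    have hht := ae_restrict_of_ae_restrict_of_subset (Icc_subset_Icc_right ht.2) hh
    have hσt0 : 0 ≤ σ t := h0 ▸ hmono ha ht ht.1
    have hμt := hμ.restrict_right (t := σ t) ⟨hσt0, hmono ht hb ht.2⟩
    have hmap := map_arcMeasure ht.1 hσt hht h0
    have hint : Integrable μ' (volume.restrict (Icc 0 (σ t))) := hμt.1
    have e := hμt.sub_eq_setIntegral hσt0
    rw [← hmap] at hint e
    have hF := hint.aestronglyMeasurable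
    have hint' := (integrable_map_measure hF (meas t ht)).1 hint
    rw [integrable_arcMeasure_iff hσt.1 hht] at hint'
    refine ⟨hint', ?_⟩
    rw [integral_map (meas t ht) hF, integral_arcMeasure hσt.1 hht] at e
    rw [← e, hcomp t ht, hcomp a ha, h0]
  have hγ2 : IsACOn γ (fun u => ρ u • μ' (σ u)) a b := by
    refine ⟨(sub b hb).1, fun t ht => ?_⟩
    rw [intervalIntegral.integral_of_le ht.1, ← integral_Icc_eq_integral_Ioc, (sub t ht).2]
    abel
  have hunit' : ∀ᵐ t ∂(volume.restrict (Icc a b)),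
      0 < ρ t → qf g (μ (σ t)) (μ' (σ t)) = 1 := by
    rw [← ae_arcMeasure_iff hσ.1]
    refine ae_of_ae_map (meas b hb) (p := fun s => qf g (μ s) (μ' s) = 1) ?_
    rw [map_arcMeasure hab hσ hh h0]
    exact hunit
  filter_upwards [hγ.ae_unique hab hγ2, hunit', hh, ae_restrict_mem measurableSet_Icc]
    with t h1 h2 h3 h4
  rw [h1, hcomp t h4, qf_smul]
  rcases h3.eq_or_lt with h | h
  · simp [← h]
  · rw [h2 h, mul_one, Real.sqrt_sq h3]

/-- Coordinate version of Corollary A.3: every absolutely continuous horizontal curve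
`γ : [a,b] → ℝⁿ` of `g`-length `L` is the reparameterization `γ = μ ∘ σ` of a unique
absolutely continuous horizontal curve `μ : [0,L] → ℝⁿ` with `g(μ)(μ',μ') = 1` a.e., by
a unique absolutely continuous nondecreasing surjection `σ : [a,b] → [0,L]`. -/
theorem stmt_14 {n : ℕ} {a b : ℝ} (hab : a ≤ b)
    (D : (Fin n → ℝ) → Submodule ℝ (Fin n → ℝ))
    (g : (Fin n → ℝ) → Matrix (Fin n) (Fin n) ℝ)
    (hgc : Continuous g) (hgp : ∀ x, (g x).PosDef)
    (γ γ' : ℝ → Fin n → ℝ) (hγ : IsACOn γ γ' a b)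
    (hhor : ∀ᵐ t ∂(volume.restrict (Icc a b)), γ' t ∈ D (γ t))
    (L : ℝ) (hL : L = ∫ t in a..b, Real.sqrt (qf g (γ t) (γ' t))) :
    ∃ (μ : ℝ → Fin n → ℝ) (σ : ℝ → ℝ),
      (∃ μ' : ℝ → Fin n → ℝ, IsACOn μ μ' 0 L ∧
        (∀ᵐ s ∂(volume.restrict (Icc 0 L)), μ' s ∈ D (μ s)) ∧
        (∀ᵐ s ∂(volume.restrict (Icc 0 L)), qf g (μ s) (μ' s) = 1)) ∧
      (∃ σ' : ℝ → ℝ, IsACOn σ σ' a b) ∧ MonotoneOn σ (Icc a b) ∧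
      MapsTo σ (Icc a b) (Icc 0 L) ∧ SurjOn σ (Icc a b) (Icc 0 L) ∧
      (∀ t ∈ Icc a b, γ t = μ (σ t)) ∧
      (∀ (μ₂ : ℝ → Fin n → ℝ) (σ₂ : ℝ → ℝ),
        (∃ μ₂' : ℝ → Fin n → ℝ, IsACOn μ₂ μ₂' 0 L ∧
          (∀ᵐ s ∂(volume.restrict (Icc 0 L)), μ₂' s ∈ D (μ₂ s)) ∧
          (∀ᵐ s ∂(volume.restrict (Icc 0 L)), qf g (μ₂ s) (μ₂' s) = 1)) →
        (∃ σ₂' : ℝ → ℝ, IsACOn σ₂ σ₂' a b) → MonotoneOn σ₂ (Icc a b) →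
        MapsTo σ₂ (Icc a b) (Icc 0 L) → SurjOn σ₂ (Icc a b) (Icc 0 L) →
        (∀ t ∈ Icc a b, γ t = μ₂ (σ₂ t)) →
        (∀ s ∈ Icc 0 L, μ₂ s = μ s) ∧ (∀ t ∈ Icc a b, σ₂ t = σ t)) := by
  set ρ : ℝ → ℝ := fun t => Real.sqrt (qf g (γ t) (γ' t)) with hρdef
  have hρ : ∀ t, 0 ≤ ρ t := fun t => Real.sqrt_nonneg _
  have hρae : ∀ᵐ t ∂(volume.restrict (Icc a b)), 0 ≤ ρ t := Filter.Eventually.of_forall hρ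
  have hz : ∀ t, ρ t = 0 → γ' t = 0 := fun t h => eq_zero_of_speed_eq_zero hgp h
  have ha : a ∈ Icc a b := ⟨le_rfl, hab⟩
  have hb : b ∈ Icc a b := ⟨hab, le_rfl⟩
  set σ : ℝ → ℝ := fun t => ∫ u in a..t, ρ u with hσdef
  have h0 : σ a = 0 := by simp [hσdef]
  have hσ : IsACOn σ ρ a b :=
    ⟨integrableOn_speed hgc hab hγ, fun t _ => by rw [h0, zero_add]⟩
  have hmono : MonotoneOn σ (Icc a b) := hσ.monotoneOn hρae
  have hLσ : L = σ b := hL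
  obtain ⟨τ, hτ⟩ := exists_rightInverse hab hσ h0
  have hmaps : ∀ t ∈ Icc a b, σ t ∈ Icc 0 (σ b) := fun t ht =>
    ⟨h0 ▸ hmono ha ht ht.1, hmono ht hb ht.2⟩
  -- Where `σ` is constant the speed vanishes a.e., hence so does `γ'`, and `γ` is constant.
  have hconst' : ∀ s ∈ Icc a b, ∀ t ∈ Icc a b, s ≤ t → σ s = σ t → γ s = γ t := by
    intro s hs t ht hst heq
    have hi : ∫ u in s..t, ρ u = 0 := by rw [← hσ.sub_eq hs ht, heq, sub_self]
    rw [intervalIntegral.integral_eq_zero_iff_of_le_of_nonneg_ae hst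
      (Filter.Eventually.of_forall hρ) (hσ.intervalIntegrable hs ht)] at hi
    have hg0 : ∫ u in s..t, γ' u = 0 := by
      rw [intervalIntegral.integral_of_le hst]
      refine integral_eq_zero_of_ae ?_
      filter_upwards [hi] with u hu
      exact hz u hu
    rw [← hγ.sub_eq hs ht, sub_eq_zero] at hg0
    exact hg0.symm
  have hconst : ∀ t ∈ Icc a b, γ (τ (σ t)) = γ t := by
    intro t ht
    obtain ⟨h1, h2⟩ := hτ (σ t) (hmaps t ht)
    rcases le_total (τ (σ t)) t with h | h
    · exact hconst' _ h1 _ ht h h2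
    · exact (hconst' _ ht _ h1 h h2.symm).symm
  have hτm : AEMeasurable τ (volume.restrict (Icc 0 (σ b))) :=
    aemeasurable_restrict_of_monotoneOn measurableSet_Icc (monotoneOn_rightInverse hσ hρae hτ)
  -- A property of almost every `t` with `ρ t > 0` holds at `t = τ s` for almost every `s`.
  have transfer : ∀ p : ℝ → Prop, (∀ᵐ t ∂(volume.restrict (Icc a b)), 0 < ρ t → p t) →
      ∀ᵐ s ∂(volume.restrict (Icc 0 (σ b))), p (τ s) := by
    intro p hp
    refine ae_of_ae_map hτm ?_
    rw [map_rightInverse hab hσ hρae h0 hτ hτm, ae_arcMeasure_iff hσ.1]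
    exact hp
  rw [hLσ]
  refine ⟨fun s => γ (τ s), σ, ⟨fun s => (ρ (τ s))⁻¹ • γ' (τ s),
    isACOn_comp_rightInverse hab hγ hσ hρ hz h0 hτ hconst, ?_, ?_⟩, ⟨ρ, hσ⟩, hmono, hmaps,
    fun s hs => ⟨τ s, hτ s hs⟩, fun t ht => (hconst t ht).symm, ?_⟩
  · refine transfer (fun t => (ρ t)⁻¹ • γ' t ∈ D (γ t)) ?_
    filter_upwards [hhor] with t ht _
    exact (D (γ t)).smul_mem _ ht
  · refine transfer (fun t => qf g (γ t) ((ρ t)⁻¹ • γ' t) = 1) (Filter.Eventually.of_forall ?_)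
    intro t ht
    have hq : ρ t ^ 2 = qf g (γ t) (γ' t) := Real.sq_sqrt (Real.sqrt_pos.1 ht).le
    rw [qf_smul, ← hq, inv_pow, inv_mul_cancel₀ (by positivity)]
  · rintro μ₂ σ₂ ⟨μ₂', hμ₂, -, hunit⟩ ⟨ρ₂, hσ₂⟩ hmono₂ hmaps₂ hsurj₂ hcomp₂
    have hLnn : (0 : ℝ) ≤ σ b := (hmaps b hb).1
    have h0₂ : σ₂ a = 0 := by
      obtain ⟨t, ht, hts⟩ := hsurj₂ ⟨le_rfl, hLnn⟩
      exact le_antisymm (hts ▸ hmono₂ ha ht ht.1) (hmaps₂ ha).1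
    have hb₂ : σ₂ b = σ b := by
      obtain ⟨t, ht, hts⟩ := hsurj₂ ⟨hLnn, le_rfl⟩
      exact le_antisymm (hmaps₂ hb).2 (hts ▸ hmono₂ ht hb ht.2)
    have hae := density_eq_speed (g := g) hab hγ hσ₂ hmono₂ h0₂ (hb₂ ▸ hμ₂) (hb₂ ▸ hunit) hcomp₂
    have hσeq : ∀ t ∈ Icc a b, σ₂ t = σ t := by
      intro t ht
      rw [hσ₂.2 t ht, h0₂, zero_add]
      refine intervalIntegral.integral_congr_ae_restrict ?_
      exact ae_restrict_of_ae_restrict_of_subset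
        (uIoc_subset_uIcc.trans (uIcc_subset_Icc ha ht)) hae
    refine ⟨fun s hs => ?_, hσeq⟩
    obtain ⟨h1, h2⟩ := hτ s hs
    change μ₂ s = γ (τ s)
    rw [hcomp₂ _ h1, hσeq _ h1, h2]
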